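/- Let x ≥ 59 and l ≥ 1 be real numbers. Let G be a finite simple graph with a weight function w: V(G) → ℝ≥0 with w(V(G)) ≠ 0, and fix a linear ordering of V(G) in nonincreasing order of w. Suppose that w(I) ≤ w(V(G))/f(x,l) for every independent set I of G, and that χ_f(N^L(v)) ≤ l for every vertex v. Then G contains a triangle-free spanning subgraph H such that w(I) ≤ w(V(G))/x for every independent set I of H; in particular, χ_f(H) ≥ x. -/

import Mathlib

open scoped Classical

/-- The fractional chromatic number of a finite simple graph `G`. -/
noncomputable def fracChrom {V : Type} [Fintype V] (G : SimpleGraph V) : ℝ :=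
  sInf { c : ℝ |
    ∃ y : Finset V → ℝ,
      (∀ I, 0 ≤ y I) ∧
      (∀ I : Finset V, y I ≠ 0 → ∀ u ∈ I, ∀ v ∈ I, ¬ G.Adj u v) ∧
      (∀ v : V, 1 ≤ ∑ I ∈ Finset.univ.filter (fun I : Finset V => v ∈ I), y I) ∧
      c = ∑ I : Finset V, y I }

/-- The function `f(x,l) = x · (Γ(x·l⁷ + 1)/Γ(x+1))³`. -/
noncomputable def fGamma (x l : ℝ) : ℝ :=
  x * (Real.Gamma (x * l ^ 7 + 1) / Real.Gamma (x + 1)) ^ 3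

/-! Induct by replacing `(x, l)` with `(x + 1, l * (x / (x + 1)) ^ (1 / 7))`, which preserves
`x * l ^ 7`, until `l < 2`; then all left neighbourhoods are independent and `G` is triangle-free.

Otherwise let every vertex keep only the edges to a random independent subset of its left
neighbourhood, drawn from a fractional colouring with `l` colours. Every triangle is destroyed,
since its two smaller vertices cannot both be selected by the largest one. Call a vertex of a set
`S` hard if its left neighbours in `S` are not fractionally colourable with the next value of `l`:
such a vertex selects none of them with probability at most `1 / (7 * x)`, independently of the
other vertices. A union bound over the subsets of all initial segments then shows that independent
sets of the random subgraph have few hard vertices on every large initial segment, and Abel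
summation turns this into a bound on their weight. Heavy sets without hard vertices are covered by
induction and can be split off beforehand. -/

open Finset

section FracColoring

variable {V V' : Type*} [Fintype V] [Fintype V'] {G : SimpleGraph V} {G' : SimpleGraph V'}
  {T : Finset V} {r : ℝ}

lemma isIndepSet_coe_iff {V : Type*} {G : SimpleGraph V} {I : Finset V} :
    G.IsIndepSet (I : Set V) ↔ ∀ u ∈ I, ∀ v ∈ I, ¬ G.Adj u v :=
  ⟨fun h _ hu _ hv huv => h hu hv huv.ne huv, fun h u hu v hv _ => h u hu v hv⟩

/-- A fractional colouring of the vertex set `T` by independent sets of the whole graph `G`, given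
by the weights of its colour classes. Keeping `G` fixed while `T` shrinks avoids passing to induced
subgraphs. -/
structure IsFracColoring (G : SimpleGraph V) (T : Finset V) (y : Finset V → ℝ) : Prop where
  nonneg : ∀ I, 0 ≤ y I
  isIndepSet : ∀ I, y I ≠ 0 → G.IsIndepSet (I : Set V)
  one_le_sum : ∀ v ∈ T, 1 ≤ ∑ I with v ∈ I, y I

/-- The fractional chromatic number of `G` on the vertex set `T` is at most `r`. -/
def FracColorableOn (G : SimpleGraph V) (T : Finset V) (r : ℝ) : Prop :=
  ∃ y, IsFracColoring G T y ∧ ∑ I, y I ≤ r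

lemma isFracColoring_singletons (G : SimpleGraph V) (T : Finset V) :
    IsFracColoring G T fun I => if #I = 1 then 1 else 0 where
  nonneg I := by positivity
  isIndepSet I hI := by
    obtain ⟨v, rfl⟩ := card_eq_one.1 (of_not_not fun h => hI (if_neg h))
    simp
  one_le_sum v _ := by
    have hv : {v} ∈ ({I | v ∈ I} : Finset (Finset V)) := by simp
    simpa using single_le_sum (f := fun I : Finset V => if #I = 1 then (1 : ℝ) else 0)
      (fun I _ => by positivity) hv

lemma isClosed_setOf_isFracColoring (G : SimpleGraph V) (T : Finset V) :
    IsClosed {y | IsFracColoring G T y} := by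
  have hsetOf : {y | IsFracColoring G T y} = (⋂ I, {y | 0 ≤ y I}) ∩
      (⋂ I : Finset V, {y | y I ≠ 0 → G.IsIndepSet (I : Set V)}) ∩
      ⋂ v ∈ T, {y | 1 ≤ ∑ I with v ∈ I, y I} := by
    ext y
    simp only [Set.mem_inter_iff, Set.mem_iInter, Set.mem_ofPred_eq]
    exact ⟨fun h => ⟨⟨h.nonneg, h.isIndepSet⟩, h.one_le_sum⟩, fun h => ⟨h.1.1, h.1.2, h.2⟩⟩
  rw [hsetOf]
  refine ((isClosed_iInter fun I => ?_).inter (isClosed_iInter fun I => ?_)).inter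
    (isClosed_biInter fun v _ => ?_)
  · exact isClosed_le continuous_const (continuous_apply I)
  · by_cases hI : G.IsIndepSet (I : Set V)
    · simp [hI]
    · simpa [hI] using isClosed_eq (continuous_apply I) continuous_const
  · exact isClosed_le continuous_const (by fun_prop)

lemma exists_isFracColoring_forall_sum_le (G : SimpleGraph V) (T : Finset V) :
    ∃ y, IsFracColoring G T y ∧ ∀ z, IsFracColoring G T z → ∑ I, y I ≤ ∑ I, z I := by
  set y₁ : Finset V → ℝ := fun I => if #I = 1 then 1 else 0
  let C : Set (Finset V → ℝ) := {y | IsFracColoring G T y} ∩ {y | ∑ I, y I ≤ ∑ I, y₁ I}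
  have hcont : Continuous fun y : Finset V → ℝ => ∑ I, y I := by fun_prop
  have hCclosed : IsClosed C :=
    (isClosed_setOf_isFracColoring G T).inter (isClosed_le hcont continuous_const)
  have hCsub : C ⊆ Set.Icc 0 fun _ => ∑ I, y₁ I := fun y hy =>
    ⟨hy.1.nonneg, fun I => (single_le_sum (fun J _ => hy.1.nonneg J) (mem_univ I)).trans hy.2⟩
  obtain ⟨y, hy, hmin⟩ := (isCompact_Icc.of_isClosed_subset hCclosed hCsub).exists_isMinOn
    ⟨y₁, isFracColoring_singletons G T, le_refl (∑ I, y₁ I)⟩ hcont.continuousOn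
  refine ⟨y, hy.1, fun z hz => ?_⟩
  rcases le_or_gt (∑ I, z I) (∑ I, y₁ I) with hle | hlt
  · exact hmin ⟨hz, hle⟩
  · exact le_trans hy.2 hlt.le

lemma fracChrom_eq_sInf_image {V : Type} [Fintype V] (G : SimpleGraph V) :
    fracChrom G = sInf ((fun y => ∑ I, y I) '' {y | IsFracColoring G univ y}) := by
  unfold fracChrom
  congr 1
  ext c
  constructor
  · rintro ⟨y, h0, hindep, hcover, rfl⟩
    exact ⟨y, ⟨h0, fun I hI => isIndepSet_coe_iff.2 (hindep I hI), fun v _ => hcover v⟩, rfl⟩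
  · rintro ⟨y, hy, rfl⟩
    exact ⟨y, hy.nonneg, fun I hI => isIndepSet_coe_iff.1 (hy.isIndepSet I hI),
      fun v => hy.one_le_sum v (mem_univ v), rfl⟩

lemma le_fracChrom_iff {V : Type} [Fintype V] {G : SimpleGraph V} {r : ℝ} :
    r ≤ fracChrom G ↔ ∀ y, IsFracColoring G univ y → r ≤ ∑ I, y I := by
  rw [fracChrom_eq_sInf_image]
  refine (le_csInf_iff ⟨0, ?_⟩
    (Set.Nonempty.image _ ⟨_, isFracColoring_singletons G univ⟩)).trans Set.forall_mem_image
  rintro - ⟨y, hy, rfl⟩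
  exact sum_nonneg fun I _ => hy.nonneg I

lemma fracColorableOn_univ_iff {V : Type} [Fintype V] {G : SimpleGraph V} {r : ℝ} :
    FracColorableOn G univ r ↔ fracChrom G ≤ r := by
  refine ⟨fun ⟨y, hy, hyr⟩ => (le_fracChrom_iff.1 le_rfl y hy).trans hyr, fun h => ?_⟩
  obtain ⟨y, hy, hmin⟩ := exists_isFracColoring_forall_sum_le G univ
  exact ⟨y, hy, (le_fracChrom_iff.2 hmin).trans h⟩

lemma FracColorableOn.mono {T' : Finset V} (h : FracColorableOn G T r) (hT : T' ⊆ T) :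
    FracColorableOn G T' r :=
  let ⟨y, hy, hyr⟩ := h
  ⟨y, ⟨hy.nonneg, hy.isIndepSet, fun v hv => hy.one_le_sum v (hT hv)⟩, hyr⟩

lemma fracColorableOn_empty (hr : 0 ≤ r) : FracColorableOn G ∅ r :=
  ⟨0, ⟨by simp, by simp, by simp⟩, by simpa using hr⟩

lemma FracColorableOn.map (e : G ↪g G') (h : FracColorableOn G T r) :
    FracColorableOn G' (T.map e.toEmbedding) r := by
  obtain ⟨y, hy, hyr⟩ := h
  let Y : Finset V' → ℝ := fun I => ∑ J with J.map e.toEmbedding = I, y J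
  have hsum (s : Finset (Finset V')) : ∑ I ∈ s, Y I = ∑ J with J.map e.toEmbedding ∈ s, y J :=
    sum_fiberwise_eq_sum_filter univ s _ y
  refine ⟨Y, ⟨fun I => sum_nonneg fun J _ => hy.nonneg J, fun I hI => ?_, fun v hv => ?_⟩, ?_⟩
  · obtain ⟨J, hJ, hyJ⟩ := exists_ne_zero_of_sum_ne_zero hI
    obtain rfl := (mem_filter.1 hJ).2
    rw [isIndepSet_coe_iff]
    simpa using isIndepSet_coe_iff.1 (hy.isIndepSet J hyJ)
  · obtain ⟨u, hu, rfl⟩ := mem_map.1 hv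
    rw [hsum]
    simpa using hy.one_le_sum u hu
  · rw [hsum]
    simpa using hyr

lemma fracColorableOn_of_fracChrom_induce_le {V : Type} [Fintype V] {G : SimpleGraph V}
    {T : Finset V} {s : Set V} {_ : Fintype s} {r : ℝ} (hT : (T : Set V) ⊆ s)
    (h : fracChrom (G.induce s) ≤ r) : FracColorableOn G T r :=
  ((fracColorableOn_univ_iff.2 h).map (SimpleGraph.Embedding.induce s)).mono fun v hv =>
    mem_map.2 ⟨⟨v, hT hv⟩, mem_univ _, rfl⟩

lemma FracColorableOn.isIndepSet (h : FracColorableOn G T r) (hr : r < 2) :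
    G.IsIndepSet (T : Set V) := by
  obtain ⟨y, hy, hyr⟩ := h
  refine isIndepSet_coe_iff.2 fun u hu v hv huv => ?_
  have hdisj : Disjoint ({I | u ∈ I} : Finset (Finset V))
      ({I | v ∈ I ∧ y I ≠ 0} : Finset (Finset V)) :=
    disjoint_filter.2 fun I _ huI hvI =>
      isIndepSet_coe_iff.1 (hy.isIndepSet I hvI.2) u huI v hvI.1 huv
  have hv' : ∑ I with v ∈ I ∧ y I ≠ 0, y I = ∑ I with v ∈ I, y I := by
    rw [← filter_filter, sum_filter_ne_zero]
  have : (2 : ℝ) ≤ r := by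
    calc (2 : ℝ) = 1 + 1 := by norm_num
      _ ≤ ∑ I with u ∈ I, y I + ∑ I with v ∈ I ∧ y I ≠ 0, y I :=
        add_le_add (hy.one_le_sum u hu) (hv' ▸ hy.one_le_sum v hv)
      _ = ∑ I ∈ ({I | u ∈ I} : Finset (Finset V)) ∪ ({I | v ∈ I ∧ y I ≠ 0} : Finset (Finset V)),
          y I := (sum_union hdisj).symm
      _ ≤ ∑ I, y I :=
        sum_le_sum_of_subset_of_nonneg (subset_univ _) fun I _ _ => hy.nonneg I
      _ ≤ r := hyr
  exact this.not_gt hr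

lemma FracColorableOn.exists_sum_eq (h : FracColorableOn G T r) :
    ∃ y, IsFracColoring G T y ∧ ∑ I, y I = r := by
  obtain ⟨y, hy, hyr⟩ := h
  have hpad : (0 : Finset V → ℝ) ≤ Pi.single ∅ (r - ∑ I, y I) :=
    Pi.single_nonneg.2 (sub_nonneg.2 hyr)
  refine ⟨y + Pi.single ∅ (r - ∑ I, y I), ⟨fun I => ?_, fun I hI => ?_, fun v hv => ?_⟩, ?_⟩
  · exact add_nonneg (hy.nonneg I) (hpad I)
  · rcases eq_or_ne I ∅ with rfl | hne
    · simp
    · exact hy.isIndepSet I (by simpa [hne] using hI)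
  · refine (hy.one_le_sum v hv).trans (sum_le_sum fun I _ => ?_)
    exact le_add_of_nonneg_right (hpad I)
  · simp [sum_add_distrib]

/-- Normalise a fractional colouring to a distribution of total mass one. If the sets missing `S`
had larger mass, deleting them would leave a cheaper fractional colouring of `S`. -/
lemma FracColorableOn.exists_distribution [DecidableEq V] (hr : 0 < r) (h : FracColorableOn G T r) :
    ∃ π ∈ stdSimplex ℝ (Finset V), (∀ I, π I ≠ 0 → G.IsIndepSet (I : Set V)) ∧
      ∀ S ⊆ T, ∀ r', ¬ FracColorableOn G S r' → ∑ I with Disjoint I S, π I ≤ 1 - r' / r := by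
  obtain ⟨y, hy, hyr⟩ := h.exists_sum_eq
  refine ⟨fun I => y I / r, ⟨fun I => div_nonneg (hy.nonneg I) hr.le, ?_⟩, fun I hI => ?_,
    fun S hST r' hS => ?_⟩
  · rw [← sum_div, hyr, div_self hr.ne']
  · exact hy.isIndepSet I fun h => hI (by simp [h])
  contrapose! hS
  refine ⟨fun I => if Disjoint I S then 0 else y I, ⟨fun I => ?_, fun I hI => ?_,
    fun v hv => ?_⟩, ?_⟩
  · split_ifs
    exacts [le_rfl, hy.nonneg I]
  · exact hy.isIndepSet I (ite_ne_left_iff.1 hI).2.symm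
  · refine (hy.one_le_sum v (hST hv)).trans_eq (sum_congr rfl fun I hI => ?_)
    have hvI : v ∈ I := by simpa using hI
    rw [if_neg (not_disjoint_iff.2 ⟨v, hvI, hv⟩)]
  · have hsplit := sum_filter_add_sum_filter_not univ (fun I => Disjoint I S) y
    rw [← sum_div, lt_div_iff₀ hr, sub_mul, div_mul_cancel₀ _ hr.ne'] at hS
    rw [sum_ite, sum_const_zero]
    linarith

/-- The easy direction of linear programming duality. -/
lemma le_fracChrom_of_forall_indep_sum_le {V : Type} [Fintype V] {H : SimpleGraph V} {w : V → ℝ}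
    {x : ℝ} (hw : ∀ v, 0 ≤ w v) (hW : 0 < ∑ v, w v) (hx : 0 < x)
    (hH : ∀ I : Finset V, H.IsIndepSet (I : Set V) → ∑ v ∈ I, w v ≤ (∑ v, w v) / x) :
    x ≤ fracChrom H := by
  refine le_fracChrom_iff.2 fun y hy => ?_
  have hle : ∑ v, w v ≤ (∑ I, y I) * ((∑ v, w v) / x) := by
    calc ∑ v, w v ≤ ∑ v, ∑ I with v ∈ I, w v * y I := by
          gcongr with v
          rw [← mul_sum]
          exact le_mul_of_one_le_right (hw v) (hy.one_le_sum v (mem_univ v))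
      _ = ∑ I, ∑ v ∈ I, w v * y I := sum_comm' (by simp)
      _ ≤ ∑ I, y I * ((∑ v, w v) / x) := by
          gcongr with I
          rw [← sum_mul, mul_comm]
          rcases eq_or_ne (y I) 0 with hI | hI
          · simp [hI]
          · exact mul_le_mul_of_nonneg_left (hH I (hy.isIndepSet I hI)) (hy.nonneg I)
      _ = (∑ I, y I) * ((∑ v, w v) / x) := (sum_mul ..).symm
  rw [← mul_div_assoc, le_div_iff₀ hx, mul_comm] at hle
  exact le_of_mul_le_mul_right hle hW

end FracColoring

section ProductDistribution

variable {ι : Type*} {K : ι → Type*} [∀ i, Fintype (K i)] {π : ∀ i, K i → ℝ}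

lemma sum_prod_filter_forall_mem [Fintype ι] (hπ : ∀ i, π i ∈ stdSimplex ℝ (K i))
    (s : Finset ι) (X : ∀ i, K i → Prop) [∀ i, DecidablePred (X i)] :
    ∑ c : ∀ i, K i with ∀ i ∈ s, X i (c i), ∏ i, π i (c i) = ∏ i ∈ s, ∑ k with X i k, π i k := by
  have hfilter : ({c | ∀ i ∈ s, X i (c i)} : Finset (∀ i, K i)) =
      Fintype.piFinset fun i => {k | i ∈ s → X i k} := by
    ext c
    simp
  rw [hfilter, ← prod_univ_sum, ← prod_subset (subset_univ s)]
  · exact prod_congr rfl fun i hi => by simp [hi]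
  · intro i _ hi
    simpa [hi] using (hπ i).2

/-- The union bound for independent choices: `S e` are the coordinates on which the event `e`
depends, and `e` occurs when `X e i` holds for the choice at every `i ∈ S e`. -/
lemma exists_choice_of_sum_prod_lt_one {E : Type*} [Finite ι]
    (hπ : ∀ i, π i ∈ stdSimplex ℝ (K i)) (events : Finset E) (S : E → Finset ι)
    (X : E → ∀ i, K i → Prop) [∀ e i, DecidablePred (X e i)]
    (hlt : ∑ e ∈ events, ∏ i ∈ S e, ∑ k with X e i k, π i k < 1) :
    ∃ c : ∀ i, K i, (∀ i, π i (c i) ≠ 0) ∧ ∀ e ∈ events, ∃ i ∈ S e, ¬ X e i (c i) := by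
  cases nonempty_fintype ι
  have hnonneg (c : ∀ i, K i) : 0 ≤ ∏ i, π i (c i) := prod_nonneg fun i _ => (hπ i).1 _
  have htotal : ∑ c : ∀ i, K i, ∏ i, π i (c i) = 1 := by
    simpa using sum_prod_filter_forall_mem hπ ∅ fun _ _ => True
  have hexpect : ∑ c : ∀ i, K i, ∑ e ∈ events with ∀ i ∈ S e, X e i (c i), ∏ i, π i (c i) <
      ∑ c : ∀ i, K i, ∏ i, π i (c i) := by
    rw [htotal]
    refine lt_of_eq_of_lt ?_ hlt
    rw [sum_comm' (t' := events) (s' := fun e => {c | ∀ i ∈ S e, X e i (c i)}) (by simp [and_comm])]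
    exact sum_congr rfl fun e _ => sum_prod_filter_forall_mem hπ (S e) (X e)
  obtain ⟨c, -, hc⟩ := exists_lt_of_sum_lt hexpect
  refine ⟨c, fun i hi => ?_, fun e he => ?_⟩
  · rw [prod_eq_zero (mem_univ i) hi] at hc
    simp at hc
  · contrapose! hc
    exact single_le_sum (f := fun _ => ∏ i, π i (c i)) (fun _ _ => hnonneg c)
      (mem_filter.2 ⟨he, hc⟩)

end ProductDistribution

section InitSeg

variable {V : Type*} [LinearOrder V] {U s : Finset V} {a u v : V}

/-- The initial segment of `U` ending at `v`; for `v ∈ U` its cardinality is the rank of `v`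
in `U`, counted from one. -/
def initSeg (U : Finset V) (v : V) : Finset V := {u ∈ U | u ≤ v}

@[simp] lemma mem_initSeg : u ∈ initSeg U v ↔ u ∈ U ∧ u ≤ v := mem_filter

lemma initSeg_subset : initSeg U v ⊆ U := filter_subset _ _

lemma initSeg_mono_right (huv : u ≤ v) : initSeg U u ⊆ initSeg U v := fun _ ht =>
  mem_initSeg.2 ⟨(mem_initSeg.1 ht).1, (mem_initSeg.1 ht).2.trans huv⟩

lemma initSeg_insert_self (ha : ∀ u ∈ s, u < a) : initSeg (insert a s) a = insert a s :=
  filter_true_of_mem fun u hu => (mem_insert.1 hu).elim le_of_eq fun hu => (ha u hu).le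

lemma initSeg_insert_of_lt (hva : v < a) : initSeg (insert a s) v = initSeg s v := by
  rw [initSeg, filter_insert, if_neg hva.not_ge, initSeg]

lemma card_filter_card_initSeg_le {M : ℝ} (hM : 0 ≤ M) (U : Finset V) :
    (#{v ∈ U | (#(initSeg U v) : ℝ) ≤ M} : ℝ) ≤ M := by
  rcases eq_empty_or_nonempty {v ∈ U | (#(initSeg U v) : ℝ) ≤ M} with hempty | hne
  · simpa [hempty] using hM
  · obtain ⟨-, hm⟩ := mem_filter.1 (max'_mem _ hne)
    refine le_trans ?_ hm
    gcongr
    exact fun u hu => mem_initSeg.2 ⟨(mem_filter.1 hu).1, le_max' _ u hu⟩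

lemma sum_card_initSeg {M : Type*} [AddCommMonoid M] (f : ℕ → M) (U : Finset V) :
    ∑ v ∈ U, f #(initSeg U v) = ∑ i ∈ range #U, f (i + 1) := by
  induction U using Finset.induction_on_max with
  | empty => simp
  | insert a s ha ih =>
    have has : a ∉ s := fun h => (ha a h).false
    rw [sum_insert has, initSeg_insert_self ha, card_insert_of_notMem has, sum_range_succ, ← ih,
      add_comm]
    congr 1
    exact sum_congr rfl fun v hv => by rw [initSeg_insert_of_lt (ha v hv)]

lemma sum_exp_neg_mul_card_initSeg_le {t : ℝ} (ht : 0 < t) (U : Finset V) :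
    ∑ v ∈ U, Real.exp (-(t * #(initSeg U v))) ≤ 1 / t := by
  set d := Real.exp (-t) with hd
  have hpow (n : ℕ) : Real.exp (-(t * n)) = d ^ n := by
    rw [hd, ← Real.exp_nat_mul]
    ring_nf
  have hstep : d * (t + 1) ≤ 1 := by
    calc d * (t + 1) ≤ d * Real.exp t := by
          gcongr
          exact Real.add_one_le_exp t
      _ = 1 := by rw [hd, ← Real.exp_add, neg_add_cancel, Real.exp_zero]
  have htelescope (i : ℕ) : t * d ^ (i + 1) ≤ d ^ i - d ^ (i + 1) := by
    have := mul_le_mul_of_nonneg_right hstep (pow_nonneg (Real.exp_pos (-t)).le i)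
    rw [← hd] at this
    linear_combination this
  simp only [hpow]
  rw [sum_card_initSeg (d ^ ·), le_div_iff₀' ht, mul_sum]
  calc ∑ i ∈ range #U, t * d ^ (i + 1) ≤ ∑ i ∈ range #U, (d ^ i - d ^ (i + 1)) :=
        sum_le_sum fun i _ => htelescope i
    _ = 1 - d ^ #U := by rw [sum_range_sub', pow_zero]
    _ ≤ 1 := sub_le_self _ (by positivity)

lemma sum_mul_le_of_forall_initSeg_sum_nonpos {w φ : V → ℝ} (hw : Antitone w)
    (hφ : ∀ v ∈ U, ∑ u ∈ initSeg U v, φ u ≤ 0) {t : ℝ} (ht : 0 ≤ t) (htw : ∀ u ∈ U, t ≤ w u) :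
    ∑ u ∈ U, w u * φ u ≤ t * ∑ u ∈ U, φ u := by
  induction U using Finset.induction_on_max generalizing t with
  | empty => simp
  | insert a s ha ih =>
    have has : a ∉ s := fun h => (ha a h).false
    have hta : t ≤ w a := htw a (mem_insert_self a s)
    have hs : ∑ u ∈ s, w u * φ u ≤ w a * ∑ u ∈ s, φ u := by
      refine ih (fun v hv => ?_) (ht.trans hta) fun u hu => hw (ha u hu).le
      simpa only [initSeg_insert_of_lt (ha v hv)] using hφ v (mem_insert_of_mem hv)
    have htotal := hφ a (mem_insert_self a s)
    rw [initSeg_insert_self ha] at htotal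
    have hmul := mul_le_mul_of_nonpos_right hta htotal
    rw [sum_insert has] at hmul ⊢
    rw [sum_insert has]
    linarith

/-- Abel summation passes from counting on initial segments to nonincreasing weights. -/
lemma mul_sum_le_of_forall_card_initSeg_le {w : V → ℝ} (hw₀ : ∀ v, 0 ≤ w v) (hw : Antitone w)
    {I K : Finset V} (hI : I ⊆ U) (hK : K ⊆ U) {a b c : ℝ}
    (hcount : ∀ v ∈ U, a * #(initSeg K v) ≤ b * #(initSeg I v) + c * #(initSeg U v)) :
    a * ∑ v ∈ K, w v ≤ b * ∑ v ∈ I, w v + c * ∑ v ∈ U, w v := by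
  let φ : V → ℝ := fun u => a * (if u ∈ K then 1 else 0) - (b * (if u ∈ I then 1 else 0) + c)
  have hφ (v : V) : ∑ u ∈ initSeg U v, φ u =
      a * #(initSeg K v) - (b * #(initSeg I v) + c * #(initSeg U v)) := by
    have hcard {A : Finset V} (hA : A ⊆ U) :
        ∑ u ∈ initSeg U v, (if u ∈ A then (1 : ℝ) else 0) = #(initSeg A v) := by
      rw [sum_boole, initSeg, filter_filter, initSeg]
      congr 2
      ext u
      simpa [and_comm] using fun _ h => hA h
    simp only [φ, sum_sub_distrib, sum_add_distrib, ← mul_sum, hcard hI, hcard hK, sum_const,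
      nsmul_eq_mul, mul_comm c]
  have hwφ : ∑ u ∈ U, w u * φ u =
      a * ∑ v ∈ K, w v - (b * ∑ v ∈ I, w v + c * ∑ v ∈ U, w v) := by
    have hsum {A : Finset V} (hA : A ⊆ U) :
        ∑ u ∈ U, w u * (if u ∈ A then 1 else 0) = ∑ u ∈ A, w u := by
      simp only [mul_ite, mul_one, mul_zero]
      rw [sum_ite_mem, inter_eq_right.2 hA]
    rw [← hsum hI, ← hsum hK]
    simp only [φ, mul_sum, ← sum_add_distrib, ← sum_sub_distrib]
    exact sum_congr rfl fun u _ => by ring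
  have := sum_mul_le_of_forall_initSeg_sum_nonpos hw
    (fun v hv => (hφ v).trans_le (sub_nonpos.2 (hcount v hv))) le_rfl fun u _ => hw₀ u
  rw [hwφ, zero_mul] at this
  exact sub_nonpos.1 this

end InitSeg

section Selection

variable {V : Type*} [LinearOrder V] {G : SimpleGraph V} {A B S : Finset V} {c c' : V → Finset V}
  {u v : V} {r : ℝ}

/-- The neighbours of `v` in `A` that precede `v`; for `A = univ` this is the `N^L(v)` of the
paper. -/
noncomputable def leftNbrs (G : SimpleGraph V) (A : Finset V) (v : V) : Finset V :=
  {u ∈ A | G.Adj u v ∧ u < v}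

@[simp] lemma mem_leftNbrs : u ∈ leftNbrs G A v ↔ u ∈ A ∧ G.Adj u v ∧ u < v := mem_filter

@[gcongr] lemma leftNbrs_mono (hAB : A ⊆ B) : leftNbrs G A v ⊆ leftNbrs G B v :=
  filter_subset_filter _ hAB

lemma leftNbrs_initSeg (huv : u ≤ v) : leftNbrs G (initSeg A v) u = leftNbrs G A u := by
  ext t
  simp only [mem_leftNbrs, mem_initSeg]
  exact ⟨fun h => ⟨h.1.1, h.2⟩, fun h => ⟨⟨h.1, h.2.2.le.trans huv⟩, h.2⟩⟩

/-- The subgraph of `G` in which `v` keeps only those edges to smaller vertices that end in the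
set `c v` selected for it. -/
def selectedSubgraph (G : SimpleGraph V) (c : V → Finset V) : SimpleGraph V :=
  SimpleGraph.fromRel fun u v => u < v ∧ G.Adj u v ∧ u ∈ c v

lemma selectedSubgraph_adj_of_lt (huv : u < v) :
    (selectedSubgraph G c).Adj u v ↔ G.Adj u v ∧ u ∈ c v := by
  simp [selectedSubgraph, huv, huv.ne, huv.not_gt]

lemma selectedSubgraph_le : selectedSubgraph G c ≤ G := by
  rintro u v ⟨-, h | h⟩
  exacts [h.2.1, h.2.1.symm]

lemma isIndepSet_selectedSubgraph_iff : (selectedSubgraph G c).IsIndepSet (S : Set V) ↔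
    ∀ v ∈ S, Disjoint (c v) (leftNbrs G S v) := by
  simp only [isIndepSet_coe_iff, disjoint_right, mem_leftNbrs]
  refine ⟨fun h v hv u ⟨hu, hadj, huv⟩ huc =>
    h u hu v hv ((selectedSubgraph_adj_of_lt huv).2 ⟨hadj, huc⟩), ?_⟩
  rintro h u hu v hv ⟨-, ⟨huv, hadj, huc⟩ | ⟨hvu, hadj, hvc⟩⟩
  exacts [h v hv ⟨hu, hadj, huv⟩ huc, h u hu ⟨hv, hadj, hvu⟩ hvc]

lemma isIndepSet_selectedSubgraph_congr (hc : Set.EqOn c c' S) :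
    (selectedSubgraph G c).IsIndepSet (S : Set V) ↔
      (selectedSubgraph G c').IsIndepSet (S : Set V) := by
  simp only [isIndepSet_selectedSubgraph_iff]
  exact forall₂_congr fun v hv => by rw [hc hv]

lemma cliqueFree_three_selectedSubgraph (hc : ∀ v, G.IsIndepSet (c v : Set V)) :
    (selectedSubgraph G c).CliqueFree 3 := by
  intro t ht
  have hne : t.Nonempty := card_pos.1 (by rw [ht.card_eq]; norm_num)
  set m := t.max' hne
  have hmt : m ∈ t := max'_mem t hne
  have hsub : ∀ u ∈ t.erase m, u ∈ c m := fun u hu => by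
    obtain ⟨hum, hut⟩ := mem_erase.1 hu
    exact ((selectedSubgraph_adj_of_lt (lt_of_le_of_ne (le_max' t u hut) hum)).1
      (ht.isClique hut hmt hum)).2
  obtain ⟨a, ha, b, hb, hab⟩ := one_lt_card.1
    (show 1 < #(t.erase m) by rw [card_erase_of_mem hmt, ht.card_eq]; norm_num)
  exact hc m (hsub a ha) (hsub b hb) hab
    (selectedSubgraph_le (ht.isClique (mem_of_mem_erase ha) (mem_of_mem_erase hb) hab))

variable [Fintype V]

/-- Inside `A`, all left neighbourhoods have fractional chromatic number at most `r`. -/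
def LeftFracColorable (G : SimpleGraph V) (A : Finset V) (r : ℝ) : Prop :=
  ∀ v ∈ A, FracColorableOn G (leftNbrs G A v) r

lemma LeftFracColorable.mono (h : LeftFracColorable G B r) (hAB : A ⊆ B) :
    LeftFracColorable G A r :=
  fun v hv => (h v (hAB hv)).mono (leftNbrs_mono hAB)

/-- The vertices of `A` whose left neighbourhood in `A` has fractional chromatic number greater
than `r`. -/
noncomputable def hardPart (G : SimpleGraph V) (r : ℝ) (A : Finset V) : Finset V :=
  {v ∈ A | ¬ FracColorableOn G (leftNbrs G A v) r}

lemma hardPart_subset : hardPart G r A ⊆ A := filter_subset _ _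

lemma leftFracColorable_sdiff_hardPart : LeftFracColorable G (A \ hardPart G r A) r := by
  intro v hv
  obtain ⟨hvA, hvr⟩ := mem_sdiff.1 hv
  simp only [hardPart, mem_filter, not_and, not_not] at hvr
  exact (hvr hvA).mono (leftNbrs_mono sdiff_subset)

lemma hardPart_initSeg : hardPart G r (initSeg A v) = initSeg (hardPart G r A) v := by
  ext u
  simp only [hardPart, mem_filter, mem_initSeg]
  constructor
  · rintro ⟨⟨huA, huv⟩, hu⟩
    exact ⟨⟨huA, by rwa [leftNbrs_initSeg huv] at hu⟩, huv⟩
  · rintro ⟨⟨huA, hu⟩, huv⟩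
    exact ⟨⟨huA, huv⟩, by rwa [leftNbrs_initSeg huv]⟩

/-- Each vertex selects independently a random independent set from a fractional colouring of its
left neighbourhood. A set `S e` stays independent only if every vertex of its hard part selects a
set missing its left neighbours in `S e`, which has probability at most `1 - l' / l`. -/
lemma exists_selection_forall_not_isIndepSet {ι : Type*} {U : Finset V} {l l' q : ℝ} (hl : 0 < l)
    (hU : LeftFracColorable G U l) (hq : 1 - l' / l ≤ q) (E : Finset ι) (S : ι → Finset V)
    (hS : ∀ e ∈ E, S e ⊆ U) (hE : ∑ e ∈ E, q ^ #(hardPart G l' (S e)) < 1) :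
    ∃ c : V → Finset V, (∀ v, G.IsIndepSet (c v : Set V)) ∧
      ∀ e ∈ E, ¬ (selectedSubgraph G c).IsIndepSet (S e : Set V) := by
  have hdist (v : V) : ∃ π ∈ stdSimplex ℝ (Finset V), (∀ I, π I ≠ 0 → G.IsIndepSet (I : Set V)) ∧
      (v ∈ U → ∀ T ⊆ leftNbrs G U v, ¬ FracColorableOn G T l' →
        ∑ I with Disjoint I T, π I ≤ q) := by
    by_cases hv : v ∈ U
    · obtain ⟨π, hπ, hindep, hmiss⟩ := (hU v hv).exists_distribution hl
      exact ⟨π, hπ, hindep, fun _ T hT hTl => (hmiss T hT l' hTl).trans hq⟩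
    · obtain ⟨π, hπ, hindep, -⟩ := (fracColorableOn_empty (G := G) hl.le).exists_distribution hl
      exact ⟨π, hπ, hindep, fun h => absurd h hv⟩
  choose π hπ hindep hmiss using hdist
  have hprod : ∀ e ∈ E, ∏ v ∈ hardPart G l' (S e),
      ∑ I with Disjoint I (leftNbrs G (S e) v), π v I ≤ q ^ #(hardPart G l' (S e)) := by
    intro e he
    rw [← prod_const]
    refine prod_le_prod (fun v _ => sum_nonneg fun I _ => (hπ v).1 I) fun v hv => ?_
    obtain ⟨hvS, hvl⟩ := mem_filter.1 hv
    exact hmiss v (hS e he hvS) _ (leftNbrs_mono (hS e he)) hvl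
  obtain ⟨c, hc, hmeet⟩ := exists_choice_of_sum_prod_lt_one hπ E (fun e => hardPart G l' (S e))
    (fun e v I => Disjoint I (leftNbrs G (S e) v)) ((sum_le_sum hprod).trans_lt hE)
  refine ⟨c, fun v => hindep v _ (hc v), fun e he h => ?_⟩
  obtain ⟨v, hv, hdisj⟩ := hmeet e he
  exact hdisj (isIndepSet_selectedSubgraph_iff.1 h v (hardPart_subset hv))

end Selection

section Counting

variable {V : Type*} {x : ℝ}

lemma pow_three_div_six_le_exp {t : ℝ} (ht : 0 ≤ t) : t ^ 3 / 6 ≤ Real.exp t := by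
  simpa [Nat.factorial] using Real.pow_div_factorial_le_exp t ht 3

lemma one_le_log_seven_mul (hx : 1 ≤ x) : 1 ≤ Real.log (7 * x) := by
  rw [Real.le_log_iff_exp_le (by positivity)]
  linarith [Real.exp_one_lt_d9]

lemma log_seven_mul_le_half (hx : 20 ≤ x) : Real.log (7 * x) ≤ x / 2 := by
  rw [Real.log_le_iff_le_exp (by positivity)]
  refine le_trans ?_ (pow_three_div_six_le_exp (by positivity))
  nlinarith [pow_le_pow_left₀ (by norm_num) hx 2]

lemma one_div_pow_le_exp_mul_exp_pow (hx : 0 < x) {g s : ℕ} {p : ℝ}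
    (h : (Real.log (7 * x) - 1) * s + p < Real.log (7 * x) * g) :
    (1 / (7 * x)) ^ g ≤ Real.exp (-p) * Real.exp (1 - Real.log (7 * x)) ^ s := by
  have hexp : 1 / (7 * x) = Real.exp (-Real.log (7 * x)) := by
    rw [Real.exp_neg, Real.exp_log (by positivity), one_div]
  rw [hexp, ← Real.exp_nat_mul, ← Real.exp_nat_mul, ← Real.exp_add, Real.exp_le_exp]
  linarith

lemma exp_one_sub_log_seven_mul_add_one_le (hx : 0 < x) :
    Real.exp (1 - Real.log (7 * x)) + 1 ≤ Real.exp (2 / (5 * x)) := by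
  have hle : Real.exp (1 - Real.log (7 * x)) ≤ 2 / (5 * x) := by
    rw [Real.exp_sub, Real.exp_log (by positivity), div_le_div_iff₀ (by positivity) (by positivity)]
    nlinarith [Real.exp_one_lt_d9]
  linarith [Real.add_one_le_exp (2 / (5 * x))]

lemma sum_powerset_one_div_pow_le_exp (hx : 0 < x) (P : Finset V) (g : Finset V → ℕ) :
    ∑ S ∈ P.powerset with
        (Real.log (7 * x) - 1) * #S + #P / (2 * x) < Real.log (7 * x) * g S,
      (1 / (7 * x)) ^ g S ≤ Real.exp (-(#P / (10 * x))) := by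
  set L := Real.log (7 * x)
  calc _ ≤ ∑ S ∈ P.powerset with (L - 1) * #S + #P / (2 * x) < L * g S,
        Real.exp (-(#P / (2 * x))) * Real.exp (1 - L) ^ #S :=
        sum_le_sum fun S hS => one_div_pow_le_exp_mul_exp_pow hx (mem_filter.1 hS).2
    _ ≤ ∑ S ∈ P.powerset, Real.exp (-(#P / (2 * x))) * Real.exp (1 - L) ^ #S :=
        sum_le_sum_of_subset_of_nonneg (filter_subset _ _) fun S _ _ => by positivity
    _ = Real.exp (-(#P / (2 * x))) * (Real.exp (1 - L) + 1) ^ #P := by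
        rw [← mul_sum, ← sum_pow_mul_eq_add_pow]
        simp only [one_pow, mul_one]
    _ ≤ Real.exp (-(#P / (2 * x))) * Real.exp (2 / (5 * x)) ^ #P := by
        gcongr
        exact exp_one_sub_log_seven_mul_add_one_le hx
    _ = Real.exp (-(#P / (10 * x))) := by
        rw [← Real.exp_nat_mul, ← Real.exp_add]
        congr 1
        field_simp
        ring

variable [LinearOrder V]

lemma sum_exp_neg_card_initSeg_lt_one (hx : 20 ≤ x) (U : Finset V) :
    ∑ v ∈ U with 20 * x ^ 2 ≤ #(initSeg U v), Real.exp (-(#(initSeg U v) / (10 * x))) < 1 := by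
  have hx0 : 0 < x := by linarith
  calc ∑ v ∈ U with 20 * x ^ 2 ≤ #(initSeg U v), Real.exp (-(#(initSeg U v) / (10 * x)))
      ≤ ∑ v ∈ U with 20 * x ^ 2 ≤ #(initSeg U v),
          Real.exp (-x) * Real.exp (-(1 / (20 * x) * #(initSeg U v))) := by
        refine sum_le_sum fun v hv => ?_
        rw [← Real.exp_add, Real.exp_le_exp]
        have hrank : x ≤ #(initSeg U v) / (20 * x) := by
          rw [le_div_iff₀ (by positivity)]
          linarith [(mem_filter.1 hv).2]
        have hhalf : (#(initSeg U v) : ℝ) / (10 * x) = 2 * (#(initSeg U v) / (20 * x)) := by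
          field_simp
          ring
        rw [hhalf, one_div_mul_eq_div]
        linarith
    _ ≤ ∑ v ∈ U, Real.exp (-x) * Real.exp (-(1 / (20 * x) * #(initSeg U v))) :=
        sum_le_sum_of_subset_of_nonneg (filter_subset _ _) fun v _ _ => by positivity
    _ ≤ Real.exp (-x) * (20 * x) := by
        rw [← mul_sum]
        gcongr
        simpa using sum_exp_neg_mul_card_initSeg_le (t := 1 / (20 * x)) (by positivity) U
    _ < 1 := by
        rw [Real.exp_neg, inv_mul_lt_iff₀ (Real.exp_pos x), mul_one]
        refine lt_of_lt_of_le ?_ (pow_three_div_six_le_exp hx0.le)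
        nlinarith [pow_le_pow_left₀ (by norm_num) hx 2]

variable [Fintype V] {G : SimpleGraph V}

/-- There is a bad event for each `v` of large rank and each set `S ⊆ initSeg U v` whose hard part
violates the bound. -/
lemma exists_selection_card_hardPart_le {U : Finset V} {l l' : ℝ} (hx : 20 ≤ x) (hl : 0 < l)
    (hU : LeftFracColorable G U l) (hl' : 1 - l' / l ≤ 1 / (7 * x)) :
    ∃ c : V → Finset V, (∀ v, G.IsIndepSet (c v : Set V)) ∧
      ∀ I ⊆ U, (selectedSubgraph G c).IsIndepSet (I : Set V) →
        ∀ v ∈ U, 20 * x ^ 2 ≤ #(initSeg U v) →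
          Real.log (7 * x) * #(initSeg (hardPart G l' I) v) ≤
            (Real.log (7 * x) - 1) * #(initSeg I v) + #(initSeg U v) / (2 * x) := by
  set L := Real.log (7 * x)
  let events : Finset (Σ _ : V, Finset V) :=
    {v ∈ U | 20 * x ^ 2 ≤ #(initSeg U v)}.sigma fun v => {S ∈ (initSeg U v).powerset |
      (L - 1) * #S + #(initSeg U v) / (2 * x) < L * #(hardPart G l' S)}
  have hevents : ∑ e ∈ events, (1 / (7 * x)) ^ #(hardPart G l' e.2) < 1 := by
    rw [sum_sigma]
    exact (sum_le_sum fun v _ => sum_powerset_one_div_pow_le_exp (by positivity) _ _).trans_lt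
      (sum_exp_neg_card_initSeg_lt_one hx U)
  obtain ⟨c, hc, hbad⟩ := exists_selection_forall_not_isIndepSet hl hU hl' events Sigma.snd
    (fun e he => (mem_powerset.1 (mem_filter.1 (mem_sigma.1 he).2).1).trans initSeg_subset) hevents
  refine ⟨c, hc, fun I hI hIindep v hv hrank => ?_⟩
  by_contra! hviol
  refine hbad ⟨v, initSeg I v⟩ ?_ (hIindep.mono (coe_subset.2 initSeg_subset))
  rw [← hardPart_initSeg] at hviol
  exact mem_sigma.2 ⟨mem_filter.2 ⟨hv, hrank⟩,
    mem_filter.2 ⟨mem_powerset.2 (filter_subset_filter _ hI), hviol⟩⟩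

end Counting

section LightSelection

variable {V : Type*} [LinearOrder V] {G : SimpleGraph V} {w : V → ℝ} {x l l' : ℝ}

lemma sum_low_rank_le {U : Finset V} {b M : ℝ} (hb : 0 ≤ b) (hwb : ∀ v ∈ U, w v ≤ b) (hM : 0 ≤ M) :
    ∑ v ∈ U with #(initSeg U v) ≤ M, w v ≤ M * b := by
  calc ∑ v ∈ U with #(initSeg U v) ≤ M, w v ≤ #{v ∈ U | (#(initSeg U v) : ℝ) ≤ M} • b :=
        sum_le_card_nsmul _ _ _ fun v hv => hwb v (mem_filter.1 hv).1
    _ ≤ M * b := by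
        rw [nsmul_eq_mul]
        gcongr
        exact card_filter_card_initSeg_le hM U

lemma add_le_div_sq_mul_of_twenty_le {W : ℝ} (hx : 20 ≤ x) (hW : 0 ≤ W) :
    W / (x * (x + 1) ^ 2) + 20 * x ^ 2 * (W / (x * (x + 1) ^ 6)) ≤ W / (x ^ 2 * (x + 1)) := by
  have hcube : 20 * x ^ 2 ≤ (x + 1) ^ 3 := by nlinarith [sq_nonneg x]
  have hdiff : W / (x ^ 2 * (x + 1)) - W / (x * (x + 1) ^ 2) - W / (x * (x + 1) ^ 3) =
      W / (x ^ 2 * (x + 1) ^ 3) := by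
    field_simp
    ring
  have hlow : 20 * x ^ 2 * (W / (x * (x + 1) ^ 6)) ≤ W / (x * (x + 1) ^ 3) := by
    calc 20 * x ^ 2 * (W / (x * (x + 1) ^ 6)) ≤ (x + 1) ^ 3 * (W / (x * (x + 1) ^ 6)) := by
          gcongr
      _ = W / (x * (x + 1) ^ 3) := by field_simp
  have : 0 ≤ W / (x ^ 2 * (x + 1) ^ 3) := by positivity
  linarith

/-- Applied with `a`, `k`, `e`, `u` the weights of an independent set, of its hard vertices of large
rank, of its remaining vertices, and of the whole vertex set under consideration. -/
lemma le_div_add_div_of_mul_le {a k e u W L : ℝ} (hx : 0 < x) (hL₀ : 0 ≤ L) (hL : L ≤ x / 2)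
    (hu : 0 ≤ u) (huW : u ≤ W) (hk : L * k ≤ (L - 1) * a + 1 / (2 * x) * u) (ha : a ≤ k + e)
    (he : e ≤ W / (x ^ 2 * (x + 1))) : a ≤ W / (x * (x + 1)) + u / (x + 1) := by
  have hW : 0 ≤ W := hu.trans huW
  have hLe : L * e ≤ W / (2 * x * (x + 1)) := by
    calc L * e ≤ L * (W / (x ^ 2 * (x + 1))) := by gcongr
      _ ≤ x / 2 * (W / (x ^ 2 * (x + 1))) := by gcongr
      _ = W / (2 * x * (x + 1)) := by field_simp
  have hua : 1 / (2 * x) * u ≤ W / (2 * x * (x + 1)) + u / (x + 1) := by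
    calc 1 / (2 * x) * u = u / (2 * x * (x + 1)) + u / (x + 1) / 2 := by
          field_simp
          ring
      _ ≤ W / (2 * x * (x + 1)) + u / (x + 1) := by
          have : u / (x + 1) / 2 ≤ u / (x + 1) := half_le_self (by positivity)
          gcongr
  have hsum : W / (2 * x * (x + 1)) + W / (2 * x * (x + 1)) = W / (x * (x + 1)) := by
    field_simp
    norm_num
  linarith [mul_le_mul_of_nonneg_left ha hL₀]

/-- Outside the hard part and the vertices of small rank there remains a set `K` with a nontrivial
bound on every initial segment, to which Abel summation applies. -/
lemma sum_le_of_card_hardPart_le [Fintype V] {U I : Finset V} {W : ℝ} (hx : 20 ≤ x)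
    (hw₀ : ∀ v, 0 ≤ w v) (hw : Antitone w) (hUW : ∑ v ∈ U, w v ≤ W)
    (hsmall : ∀ v ∈ U, w v ≤ W / (x * (x + 1) ^ 6))
    (hI : I ⊆ U) (heasy : ∑ v ∈ I \ hardPart G l' I, w v ≤ W / (x * (x + 1) ^ 2))
    (hcount : ∀ v ∈ U, 20 * x ^ 2 ≤ #(initSeg U v) →
      Real.log (7 * x) * #(initSeg (hardPart G l' I) v) ≤
        (Real.log (7 * x) - 1) * #(initSeg I v) + #(initSeg U v) / (2 * x)) :
    ∑ v ∈ I, w v ≤ W / (x * (x + 1)) + (∑ v ∈ U, w v) / (x + 1) := by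
  set L := Real.log (7 * x)
  have hL : 1 ≤ L := one_le_log_seven_mul (by linarith)
  have hU₀ : 0 ≤ ∑ v ∈ U, w v := sum_nonneg fun v _ => hw₀ v
  have hW : 0 ≤ W := hU₀.trans hUW
  let K : Finset V := {v ∈ hardPart G l' I | 20 * x ^ 2 < #(initSeg U v)}
  have hKI : K ⊆ I := (filter_subset _ _).trans hardPart_subset
  have hcountK : ∀ v ∈ U, L * #(initSeg K v) ≤
      (L - 1) * #(initSeg I v) + 1 / (2 * x) * #(initSeg U v) := by
    intro v hv
    rcases (initSeg K v).eq_empty_or_nonempty with hempty | ⟨u, hu⟩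
    · rw [hempty, card_empty, Nat.cast_zero, mul_zero]
      have : 0 ≤ L - 1 := by linarith
      positivity
    · obtain ⟨huK, huv⟩ := mem_initSeg.1 hu
      have hrank : 20 * x ^ 2 ≤ #(initSeg U v) :=
        (mem_filter.1 huK).2.le.trans (Nat.cast_le.2 (card_le_card (initSeg_mono_right huv)))
      calc L * #(initSeg K v) ≤ L * #(initSeg (hardPart G l' I) v) := by
            gcongr
            exact filter_subset_filter _ (filter_subset _ _)
        _ ≤ (L - 1) * #(initSeg I v) + #(initSeg U v) / (2 * x) := hcount v hv hrank
        _ = _ := by rw [one_div_mul_eq_div]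
  have hcover : ∑ v ∈ I, w v ≤ ∑ v ∈ K, w v +
      (∑ v ∈ I \ hardPart G l' I, w v + ∑ v ∈ U with #(initSeg U v) ≤ 20 * x ^ 2, w v) := by
    have hlow : ∑ v ∈ hardPart G l' I with ¬ 20 * x ^ 2 < #(initSeg U v), w v ≤
        ∑ v ∈ U with #(initSeg U v) ≤ 20 * x ^ 2, w v := by
      simp only [not_lt]
      exact sum_le_sum_of_subset_of_nonneg
        (filter_subset_filter _ (hardPart_subset.trans hI)) fun v _ _ => hw₀ v
    rw [← sum_sdiff hardPart_subset (s₁ := hardPart G l' I),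
      ← sum_filter_add_sum_filter_not (hardPart G l' I) (fun v => 20 * x ^ 2 < #(initSeg U v))]
    linarith
  exact le_div_add_div_of_mul_le (by linarith) (by linarith) (log_seven_mul_le_half hx) hU₀ hUW
    (mul_sum_le_of_forall_card_initSeg_le hw₀ hw hI (hKI.trans hI) hcountK) hcover
    ((add_le_add heasy (sum_low_rank_le (by positivity) hsmall (by positivity))).trans
      (add_le_div_sq_mul_of_twenty_le hx hW))

/-- Vertices can select independent sets so that every subset of `A` that is independent in the
selected subgraph has weight at most `b`. -/
def HasLightSelection (G : SimpleGraph V) (w : V → ℝ) (A : Finset V) (b : ℝ) : Prop :=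
  ∃ c : V → Finset V, (∀ v, G.IsIndepSet (c v : Set V)) ∧
    ∀ I ⊆ A, (selectedSubgraph G c).IsIndepSet (I : Set V) → ∑ v ∈ I, w v ≤ b

lemma hasLightSelection_empty : HasLightSelection G w ∅ 0 :=
  ⟨fun _ => ∅, by simp, fun I hI _ => by simp [subset_empty.1 hI]⟩

lemma HasLightSelection.union {A B : Finset V} {a b : ℝ} (hA : HasLightSelection G w A a)
    (hB : HasLightSelection G w B b) : HasLightSelection G w (A ∪ B) (a + b) := by
  obtain ⟨cA, hcA, hlightA⟩ := hA
  obtain ⟨cB, hcB, hlightB⟩ := hB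
  refine ⟨A.piecewise cA cB, fun v => A.piecewise_cases cA cB
    (fun S => G.IsIndepSet (S : Set V)) (hcA v) (hcB v), fun I hI hindep => ?_⟩
  rw [← sum_inter_add_sum_sdiff I A]
  refine add_le_add (hlightA _ inter_subset_right ?_) (hlightB _ (sdiff_le_iff.2 hI) ?_)
  · refine (isIndepSet_selectedSubgraph_congr fun v hv => ?_).1
      (hindep.mono (coe_subset.2 inter_subset_left))
    exact A.piecewise_eq_of_mem _ _ (mem_inter.1 hv).2
  · refine (isIndepSet_selectedSubgraph_congr fun v hv => ?_).1
      (hindep.mono (coe_subset.2 sdiff_subset))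
    exact A.piecewise_eq_of_notMem _ _ (mem_sdiff.1 hv).2

lemma exists_maximal_hasLightSelection (G : SimpleGraph V) (w : V → ℝ) (A : Finset V) (y : ℝ) :
    ∃ D ⊆ A, HasLightSelection G w D ((∑ v ∈ D, w v) / y) ∧
      ∀ J ⊆ A \ D, HasLightSelection G w J ((∑ v ∈ J, w v) / y) → J = ∅ := by
  obtain ⟨D, hD, hmax⟩ := exists_maximal
    (s := {D ∈ A.powerset | HasLightSelection G w D ((∑ v ∈ D, w v) / y)})
    ⟨∅, mem_filter.2 ⟨empty_mem_powerset A, by simpa using hasLightSelection_empty⟩⟩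
  obtain ⟨hDA, hDlight⟩ := mem_filter.1 hD
  rw [mem_powerset] at hDA
  refine ⟨D, hDA, hDlight, fun J hJ hJlight => ?_⟩
  have hdisj : Disjoint D J := disjoint_sdiff.mono_right hJ
  have hunion : D ∪ J ⊆ D := by
    refine hmax (mem_filter.2 ⟨mem_powerset.2 ?_, ?_⟩) subset_union_left
    · exact union_subset hDA (hJ.trans sdiff_subset)
    · simpa only [sum_union hdisj, add_div] using hDlight.union hJlight
  exact disjoint_self.1 (hdisj.mono_left (subset_union_right.trans hunion))

/-- Remove a maximal `D` with a light selection of quality `x + 1`. By maximality no heavy subset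
of `A \ D` is left-colourable with `l'` colours, so a random selection works on `A \ D`. -/
lemma hasLightSelection_of_forall_subset [Fintype V] {A : Finset V} (hx : 20 ≤ x) (hl : 0 < l)
    (hl' : 1 - l' / l ≤ 1 / (7 * x)) (hw₀ : ∀ v, 0 ≤ w v) (hw : Antitone w)
    (hA : LeftFracColorable G A l) (hsmall : ∀ v ∈ A, w v ≤ (∑ v ∈ A, w v) / (x * (x + 1) ^ 6))
    (hheavy : ∀ J ⊆ A, LeftFracColorable G J l' →
      (∑ v ∈ A, w v) / (x * (x + 1) ^ 2) < ∑ v ∈ J, w v →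
      HasLightSelection G w J ((∑ v ∈ J, w v) / (x + 1))) :
    HasLightSelection G w A ((∑ v ∈ A, w v) / x) := by
  have : 0 < x := by linarith
  obtain ⟨D, hDA, hDlight, hmax⟩ := exists_maximal_hasLightSelection G w A (x + 1)
  set U := A \ D
  have hUA : U ⊆ A := sdiff_subset
  have hWU : ∑ v ∈ U, w v ≤ ∑ v ∈ A, w v :=
    sum_le_sum_of_subset_of_nonneg hUA fun v _ _ => hw₀ v
  have heasy : ∀ J ⊆ U, LeftFracColorable G J l' →
      ∑ v ∈ J, w v ≤ (∑ v ∈ A, w v) / (x * (x + 1) ^ 2) := by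
    intro J hJ hJl
    by_contra! hJw
    have hJempty := hmax J hJ (hheavy J (hJ.trans hUA) hJl hJw)
    rw [hJempty, sum_empty] at hJw
    exact hJw.not_ge (div_nonneg (sum_nonneg fun v _ => hw₀ v) (by positivity))
  obtain ⟨c, hc, hcount⟩ := exists_selection_card_hardPart_le hx hl (hA.mono hUA) hl'
  have hUlight : HasLightSelection G w U
      ((∑ v ∈ A, w v) / (x * (x + 1)) + (∑ v ∈ U, w v) / (x + 1)) :=
    ⟨c, hc, fun I hI hindep => sum_le_of_card_hardPart_le hx hw₀ hw hWU
      (fun v hv => hsmall v (hUA hv)) hI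
      (heasy _ (sdiff_subset.trans hI) leftFracColorable_sdiff_hardPart) (hcount I hI hindep)⟩
  have hbound : (∑ v ∈ D, w v) / (x + 1) +
      ((∑ v ∈ A, w v) / (x * (x + 1)) + (∑ v ∈ U, w v) / (x + 1)) = (∑ v ∈ A, w v) / x := by
    rw [← sum_sdiff hDA]
    field_simp
    ring
  rw [← hbound]
  simpa only [U, union_sdiff_of_subset hDA] using hDlight.union hUlight

lemma hasLightSelection_of_lt_two [Fintype V] {A : Finset V} {b : ℝ}
    (hA : LeftFracColorable G A l) (hl : l < 2)
    (hlight : ∀ I ⊆ A, G.IsIndepSet (I : Set V) → ∑ v ∈ I, w v ≤ b) :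
    HasLightSelection G w A b := by
  refine ⟨fun v => if v ∈ A then leftNbrs G A v else ∅, fun v => ?_, fun I hI hindep => ?_⟩
  · by_cases hv : v ∈ A
    · simpa only [if_pos hv] using (hA v hv).isIndepSet hl
    · simp [hv]
  · refine hlight I hI (isIndepSet_coe_iff.2 ?_)
    have hleft : ∀ v ∈ I, ∀ u ∈ I, u < v → ¬ G.Adj u v := fun v hv u hu huv hadj =>
      disjoint_left.1 (isIndepSet_selectedSubgraph_iff.1 hindep v hv)
        (by simp [hI hv, hI hu, hadj, huv]) (mem_leftNbrs.2 ⟨hu, hadj, huv⟩)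
    intro u hu v hv hadj
    rcases hadj.ne.lt_or_gt with huv | hvu
    exacts [hleft v hv u hu huv hadj, hleft u hu v hv hvu hadj.symm]

end LightSelection

section Induction

variable {x l : ℝ}

lemma le_fGamma (hx : 1 ≤ x) (hl : 1 ≤ l) : x ≤ fGamma x l := by
  have hpos : 0 < Real.Gamma (x + 1) := Real.Gamma_pos_of_pos (by linarith)
  have hle : x ≤ x * l ^ 7 := le_mul_of_one_le_right (by linarith) (one_le_pow₀ hl)
  have hmono : Real.Gamma (x + 1) ≤ Real.Gamma (x * l ^ 7 + 1) :=
    Real.Gamma_strictMonoOn_Ici.monotoneOn (Set.mem_Ici.2 (by linarith))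
      (Set.mem_Ici.2 (by linarith)) (by linarith)
  exact le_mul_of_one_le_right (by linarith) (one_le_pow₀ ((one_le_div hpos).2 hmono))

lemma mul_pow_six_le_fGamma (hx : 1 ≤ x) (hl : 2 ≤ l) : x * (x + 1) ^ 6 ≤ fGamma x l := by
  have hpos : 0 < Real.Gamma (x + 1) := Real.Gamma_pos_of_pos (by linarith)
  have hle : x + 2 ≤ x * l ^ 7 := by
    calc x + 2 ≤ x * 2 ^ 7 := by linarith
      _ ≤ x * l ^ 7 := by gcongr
  have hratio : (x + 1) ^ 2 ≤ Real.Gamma (x * l ^ 7 + 1) / Real.Gamma (x + 1) := by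
    rw [le_div_iff₀ hpos]
    calc (x + 1) ^ 2 * Real.Gamma (x + 1) ≤ (x + 2) * ((x + 1) * Real.Gamma (x + 1)) := by
          rw [sq, mul_assoc]
          gcongr
          norm_num
      _ = Real.Gamma (x + 2 + 1) := by
          rw [Real.Gamma_add_one (s := x + 2) (by linarith), show x + 2 = x + 1 + 1 by ring,
            Real.Gamma_add_one (s := x + 1) (by linarith)]
      _ ≤ Real.Gamma (x * l ^ 7 + 1) :=
          Real.Gamma_strictMonoOn_Ici.monotoneOn (Set.mem_Ici.2 (by linarith))
            (Set.mem_Ici.2 (by linarith)) (by linarith)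
  calc x * (x + 1) ^ 6 = x * ((x + 1) ^ 2) ^ 3 := by ring
    _ ≤ fGamma x l := by
        unfold fGamma
        gcongr

lemma fGamma_eq_mul_fGamma_add_one {l' : ℝ} (hx : 0 ≤ x) (h : (x + 1) * l' ^ 7 = x * l ^ 7) :
    fGamma x l = x * (x + 1) ^ 2 * fGamma (x + 1) l' := by
  have : 0 < Real.Gamma (x + 1) := Real.Gamma_pos_of_pos (by linarith)
  unfold fGamma
  rw [h, Real.Gamma_add_one (s := x + 1) (by linarith)]
  field_simp

lemma exists_add_one_mul_pow_seven_eq (hx : 0 < x) :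
    ∃ r : ℝ, 0 < r ∧ 1 - 1 / (7 * x) ≤ r ∧ (x + 1) * r ^ 7 = x := by
  set s := (1 + 1 / x) ^ (1 / 7 : ℝ) with hs
  have hs₀ : 0 < s := by positivity
  have hs7 : s ^ 7 = 1 + 1 / x := by
    rw [hs, ← Real.rpow_natCast, ← Real.rpow_mul (by positivity)]
    norm_num
  have hbernoulli : s ≤ 1 + 1 / (7 * x) := by
    calc s ≤ 1 + 1 / 7 * (1 / x) :=
          rpow_one_add_le_one_add_mul_self (by linarith [one_div_pos.2 hx]) (by norm_num)
            (by norm_num)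
      _ = 1 + 1 / (7 * x) := by rw [one_div_mul_one_div]
  refine ⟨s⁻¹, inv_pos.2 hs₀, ?_, ?_⟩
  · calc 1 - 1 / (7 * x) ≤ 2 - s := by linarith
      _ ≤ s⁻¹ := by
          rw [← one_div, le_div_iff₀ hs₀]
          nlinarith [sq_nonneg (s - 1)]
  · rw [inv_pow, hs7]
    field_simp

variable {V : Type*} [Fintype V] [LinearOrder V] {G : SimpleGraph V} {w : V → ℝ}

lemma hasLightSelection_of_light_indep_sets (hw₀ : ∀ v, 0 ≤ w v) (hw : Antitone w) (n : ℕ)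
    {A : Finset V} (hx : 20 ≤ x) (hl : 1 ≤ l) (hn : x * l ^ 7 ≤ x + n)
    (hA : LeftFracColorable G A l)
    (hindep : ∀ I ⊆ A, G.IsIndepSet (I : Set V) → ∑ v ∈ I, w v ≤ (∑ v ∈ A, w v) / fGamma x l) :
    HasLightSelection G w A ((∑ v ∈ A, w v) / x) := by
  have hA₀ : 0 ≤ ∑ v ∈ A, w v := sum_nonneg fun v _ => hw₀ v
  have hx0 : 0 < x := by linarith
  induction n using Nat.strong_induction_on generalizing x l A with
  | _ n ih =>
  rcases lt_or_ge l 2 with hl2 | hl2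
  · refine hasLightSelection_of_lt_two hA hl2 fun I hI hIindep => (hindep I hI hIindep).trans ?_
    gcongr
    exact le_fGamma (by linarith) hl
  have hl7 : x * 2 ^ 7 ≤ x * l ^ 7 := by gcongr
  have hn₀ : 0 < n := by
    rw [← Nat.cast_pos (α := ℝ)]
    linarith
  obtain ⟨r, hr₀, hr, hr7⟩ := exists_add_one_mul_pow_seven_eq hx0
  have hlr : (x + 1) * (l * r) ^ 7 = x * l ^ 7 := by
    rw [mul_pow, mul_left_comm, hr7, mul_comm]
  have hlr₁ : 1 ≤ l * r := by
    by_contra! hlt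
    have : (l * r) ^ 7 ≤ 1 := pow_le_one₀ (by positivity) hlt.le
    nlinarith
  refine hasLightSelection_of_forall_subset hx (by linarith) ?_ hw₀ hw hA (fun v hv => ?_)
    (l' := l * r) fun J hJ hJr hJw => ?_
  · rw [mul_div_cancel_left₀ _ (by linarith)]
    linarith
  · have hlight : w v ≤ (∑ v ∈ A, w v) / fGamma x l := by
      simpa using hindep {v} (singleton_subset_iff.2 hv) (by simp)
    refine hlight.trans ?_
    gcongr
    exact mul_pow_six_le_fGamma (by linarith) hl2
  · refine ih (n - 1) (Nat.sub_one_lt hn₀.ne') (by linarith) hlr₁ ?_ hJr (fun I hI hIindep => ?_)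
      (sum_nonneg fun v _ => hw₀ v) (by linarith)
    · rw [hlr, Nat.cast_pred hn₀]
      linarith
    · have hf : 0 < fGamma (x + 1) (l * r) := by
        linarith [le_fGamma (x := x + 1) (by linarith) hlr₁]
      calc ∑ v ∈ I, w v ≤ (∑ v ∈ A, w v) / fGamma x l := hindep I (hI.trans hJ) hIindep
        _ = (∑ v ∈ A, w v) / (x * (x + 1) ^ 2) / fGamma (x + 1) (l * r) := by
            rw [fGamma_eq_mul_fGamma_add_one hx0.le hlr, div_div]
        _ ≤ (∑ v ∈ J, w v) / fGamma (x + 1) (l * r) := by gcongr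

end Induction

theorem triangle_free_spanning_subgraph_of_light_indep_sets_general
    (x l : ℝ) (hx : 20 ≤ x) (hl : 1 ≤ l)
    (V : Type) [Fintype V] [LinearOrder V] (G : SimpleGraph V)
    (w : V → ℝ) (hw0 : ∀ v, 0 ≤ w v)
    (hmono : ∀ u v : V, u < v → w v ≤ w u)
    (hwV : ∑ v, w v ≠ 0)
    (hindep : ∀ I : Finset V, (∀ u ∈ I, ∀ v ∈ I, ¬ G.Adj u v) →
      ∑ v ∈ I, w v ≤ (∑ v, w v) / fGamma x l)
    (hleft : ∀ v : V, fracChrom (G.induce {u | G.Adj u v ∧ u < v}) ≤ l) :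
    ∃ H : SimpleGraph V, H ≤ G ∧ H.CliqueFree 3 ∧
      (∀ I : Finset V, (∀ u ∈ I, ∀ v ∈ I, ¬ H.Adj u v) →
        ∑ v ∈ I, w v ≤ (∑ v, w v) / x) ∧
      x ≤ fracChrom H := by
  have hx0 : 0 < x := by linarith
  have hW : 0 < ∑ v, w v := lt_of_le_of_ne (sum_nonneg fun v _ => hw0 v) hwV.symm
  have hcolor : LeftFracColorable G univ l := fun v _ =>
    fracColorableOn_of_fracChrom_induce_le (fun u hu => (mem_leftNbrs.1 hu).2) (hleft v)
  obtain ⟨n, hn⟩ := exists_nat_ge (x * l ^ 7 - x)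
  obtain ⟨c, hc, hlight⟩ := hasLightSelection_of_light_indep_sets hw0
    (antitone_iff_forall_lt.2 hmono) n hx hl (by linarith) hcolor
    fun I _ hI => hindep I (isIndepSet_coe_iff.1 hI)
  have hlight' : ∀ I : Finset V, (selectedSubgraph G c).IsIndepSet (I : Set V) →
      ∑ v ∈ I, w v ≤ (∑ v, w v) / x := fun I => hlight I (subset_univ I)
  exact ⟨selectedSubgraph G c, selectedSubgraph_le, cliqueFree_three_selectedSubgraph hc,
    fun I hI => hlight' I (isIndepSet_coe_iff.2 hI),
    le_fracChrom_of_forall_indep_sum_le hw0 hW hx0 hlight'⟩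

theorem triangle_free_spanning_subgraph_of_light_indep_sets
    (x l : ℝ) (hx : 59 ≤ x) (hl : 1 ≤ l)
    (V : Type) [Fintype V] [LinearOrder V] (G : SimpleGraph V)
    (w : V → ℝ) (hw0 : ∀ v, 0 ≤ w v)
    (hmono : ∀ u v : V, u < v → w v ≤ w u)
    (hwV : ∑ v, w v ≠ 0)
    (hindep : ∀ I : Finset V, (∀ u ∈ I, ∀ v ∈ I, ¬ G.Adj u v) →
      ∑ v ∈ I, w v ≤ (∑ v, w v) / fGamma x l)
    (hleft : ∀ v : V, fracChrom (G.induce {u | G.Adj u v ∧ u < v}) ≤ l) :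
    ∃ H : SimpleGraph V, H ≤ G ∧ H.CliqueFree 3 ∧
      (∀ I : Finset V, (∀ u ∈ I, ∀ v ∈ I, ¬ H.Adj u v) →
        ∑ v ∈ I, w v ≤ (∑ v, w v) / x) ∧
      x ≤ fracChrom H :=
  triangle_free_spanning_subgraph_of_light_indep_sets_general x l (by linarith) hl V G w hw0
    hmono hwV hindep hleft
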